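/- (Lemma on commutation criteria, pointwise form.) Let φ ∈ Δ be a unit spinor, S ∈ End(ℝ^6), η a linear functional on ℝ^6, and set ν(x) := S(x)·φ + η(x)·j(φ) for x ∈ ℝ^6. Then S commutes with J_φ (S∘J_φ = J_φ∘S) if and only if ⟨(J_φ y)·ν(x), φ⟩ = −⟨y·ν(J_φ x), φ⟩ for all x, y ∈ ℝ^6, and S anti-commutes with J_φ (S∘J_φ = −J_φ∘S) if and only if ⟨(J_φ y)·ν(x), φ⟩ = ⟨y·ν(J_φ x), φ⟩ for all x, y ∈ ℝ^6. -/

import Mathlib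

open RealInnerProductSpace

noncomputable section

/-- The spin representation space Δ = ℝ^8. -/
abbrev Δ : Type := EuclideanSpace ℝ (Fin 8)

/-- The standard skew endomorphism E_{ij} of ℝ^8: u_i ↦ u_j, u_j ↦ -u_i, others ↦ 0. -/
def E (i j : Fin 8) : Δ →ₗ[ℝ] Δ where
  toFun v := v i • EuclideanSpace.single j (1 : ℝ) - v j • EuclideanSpace.single i (1 : ℝ)
  map_add' x y := by
    simp only [PiLp.add_apply, add_smul]
    module
  map_smul' c x := by
    simp only [PiLp.smul_apply, smul_eq_mul, RingHom.id_apply, mul_smul]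
    module

/-- The seven Clifford endomorphisms e_1, …, e_7 (indexed 0,…,6). -/
def cliff : Fin 7 → (Δ →ₗ[ℝ] Δ) :=
  ![  E 0 7 + E 1 6 - E 2 5 - E 3 4,
    - E 0 6 + E 1 7 + E 2 4 - E 3 5,
    - E 0 5 + E 1 4 - E 2 7 + E 3 6,
    - E 0 4 - E 1 5 - E 2 6 - E 3 7,
    - E 0 2 - E 1 3 + E 4 6 + E 5 7,
      E 0 3 - E 1 2 - E 4 7 + E 5 6,
      E 0 1 - E 2 3 - E 4 5 + E 6 7]

/-- j = e_1 ∘ e_2 ∘ e_3 ∘ e_4 ∘ e_5 ∘ e_6. -/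
def jmap : Δ →ₗ[ℝ] Δ :=
  cliff 0 ∘ₗ cliff 1 ∘ₗ cliff 2 ∘ₗ cliff 3 ∘ₗ cliff 4 ∘ₗ cliff 5

/-- Clifford multiplication of a vector x ∈ ℝ^6 on a spinor. -/
def cm6 (x : EuclideanSpace ℝ (Fin 6)) (φ : Δ) : Δ :=
  ∑ i : Fin 6, x i • cliff i.castSucc φ

/-- Clifford multiplication of a vector x ∈ ℝ^7 on a spinor. -/
def cm7 (x : EuclideanSpace ℝ (Fin 7)) (φ : Δ) : Δ :=
  ∑ i : Fin 7, x i • cliff i φ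


lemma E_apply (i j : Fin 8) (v : Δ) (k : Fin 8) :
    E i j v k = (if k = j then v i else 0) - (if k = i then v j else 0) := by
  simp [E]

lemma cliff_apply (v : Δ) :
    cliff 0 v = !₂[-v 7, -v 6, v 5, v 4, -v 3, -v 2, v 1, v 0] ∧
    cliff 1 v = !₂[v 6, -v 7, -v 4, v 5, v 2, -v 3, -v 0, v 1] ∧
    cliff 2 v = !₂[v 5, -v 4, v 7, -v 6, v 1, -v 0, v 3, -v 2] ∧
    cliff 3 v = !₂[v 4, v 5, v 6, v 7, -v 0, -v 1, -v 2, -v 3] ∧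
    cliff 4 v = !₂[v 2, v 3, -v 0, -v 1, -v 6, -v 7, v 4, v 5] ∧
    cliff 5 v = !₂[-v 3, v 2, -v 1, v 0, v 7, -v 6, v 5, -v 4] := by
  refine ⟨?_, ?_, ?_, ?_, ?_, ?_⟩ <;> ext k <;> fin_cases k <;> simp [cliff, E_apply]

lemma jmap_apply (v : Δ) :
    jmap v = !₂[v 1, -v 0, -v 3, v 2, -v 5, v 4, v 7, -v 6] := by
  obtain h := cliff_apply
  simp only [jmap, LinearMap.comp_apply]
  rw [(h _).1, (h _).2.1, (h _).2.2.1, (h _).2.2.2.1, (h _).2.2.2.2.1, (h _).2.2.2.2.2]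
  ext k
  fin_cases k <;> simp

lemma cm6_apply (x : EuclideanSpace ℝ (Fin 6)) (v : Δ) :
    cm6 x v = x 0 • !₂[-v 7, -v 6, v 5, v 4, -v 3, -v 2, v 1, v 0] +
      x 1 • !₂[v 6, -v 7, -v 4, v 5, v 2, -v 3, -v 0, v 1] +
      x 2 • !₂[v 5, -v 4, v 7, -v 6, v 1, -v 0, v 3, -v 2] +
      x 3 • !₂[v 4, v 5, v 6, v 7, -v 0, -v 1, -v 2, -v 3] +
      x 4 • !₂[v 2, v 3, -v 0, -v 1, -v 6, -v 7, v 4, v 5] +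
      x 5 • !₂[-v 3, v 2, -v 1, v 0, v 7, -v 6, v 5, -v 4] := by
  obtain ⟨h0, h1, h2, h3, h4, h5⟩ := cliff_apply v
  rw [← h0, ← h1, ← h2, ← h3, ← h4, ← h5, cm6, Fin.sum_univ_six]
  rfl

lemma cm6_skew (y : EuclideanSpace ℝ (Fin 6)) (ψ χ : Δ) :
    ⟪cm6 y ψ, χ⟫ = -⟪ψ, cm6 y χ⟫ := by
  simp [cm6_apply, PiLp.inner_apply, Fin.sum_univ_eight]
  ring

lemma cm6_inner (x y : EuclideanSpace ℝ (Fin 6)) (ψ : Δ) :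
    ⟪cm6 x ψ, cm6 y ψ⟫ = ⟪x, y⟫ * ⟪ψ, ψ⟫ := by
  simp [cm6_apply, PiLp.inner_apply, Fin.sum_univ_eight, Fin.sum_univ_six,
    -inner_self_eq_norm_sq_to_K]
  ring

lemma jmap_skew (ψ χ : Δ) : ⟪jmap ψ, χ⟫ = -⟪ψ, jmap χ⟫ := by
  simp [jmap_apply, PiLp.inner_apply, Fin.sum_univ_eight]
  ring

lemma jmap_cm6 (y : EuclideanSpace ℝ (Fin 6)) (ψ : Δ) : ⟪jmap ψ, cm6 y ψ⟫ = 0 := by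
  simp [jmap_apply, cm6_apply, PiLp.inner_apply, Fin.sum_univ_eight]
  ring

/-- Commutation criteria: with ν(x) := S(x)·φ + η(x)·j(φ), S commutes with J_φ iff
⟨(J_φ y)·ν(x), φ⟩ = -⟨y·ν(J_φ x), φ⟩ for all x, y, and anti-commutes with J_φ iff
⟨(J_φ y)·ν(x), φ⟩ = ⟨y·ν(J_φ x), φ⟩ for all x, y. Here J_φ is the unique linear map
with j(x·φ) = (J_φ x)·φ. -/
theorem commutation_criteria (φ : Δ) (hφ : ⟪φ, φ⟫ = 1)
    (J : EuclideanSpace ℝ (Fin 6) →ₗ[ℝ] EuclideanSpace ℝ (Fin 6))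
    (hJ : ∀ x : EuclideanSpace ℝ (Fin 6), jmap (cm6 x φ) = cm6 (J x) φ)
    (S : EuclideanSpace ℝ (Fin 6) →ₗ[ℝ] EuclideanSpace ℝ (Fin 6))
    (η : EuclideanSpace ℝ (Fin 6) →ₗ[ℝ] ℝ) :
    (S ∘ₗ J = J ∘ₗ S ↔
      (∀ x y : EuclideanSpace ℝ (Fin 6),
        ⟪cm6 (J y) (cm6 (S x) φ + η x • jmap φ), φ⟫ =
          -⟪cm6 y (cm6 (S (J x)) φ + η (J x) • jmap φ), φ⟫)) ∧
    (S ∘ₗ J = -(J ∘ₗ S) ↔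
      (∀ x y : EuclideanSpace ℝ (Fin 6),
        ⟪cm6 (J y) (cm6 (S x) φ + η x • jmap φ), φ⟫ =
          ⟪cm6 y (cm6 (S (J x)) φ + η (J x) • jmap φ), φ⟫)) := by
  have hB : ∀ x y : EuclideanSpace ℝ (Fin 6), ⟪cm6 x φ, cm6 y φ⟫ = ⟪x, y⟫ := fun x y => by
    rw [cm6_inner, hφ, mul_one]
  have hS : ∀ x y : EuclideanSpace ℝ (Fin 6), ⟪J x, y⟫ = -⟪x, J y⟫ := fun x y => by
    rw [← hB, ← hB, ← hJ, ← hJ, jmap_skew]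
  have key : ∀ (x y : EuclideanSpace ℝ (Fin 6)) (c : ℝ),
      ⟪cm6 y (cm6 x φ + c • jmap φ), φ⟫ = -⟪x, y⟫ := fun x y c => by
    rw [cm6_skew, inner_add_left, real_inner_smul_left, jmap_cm6, hB, mul_zero, add_zero]
  simp only [key]
  constructor
  · constructor
    · intro h x y
      have h1 : S (J x) = J (S x) := LinearMap.congr_fun h x
      rw [h1, hS]
      ring
    · intro h
      refine LinearMap.ext fun x => ext_inner_right ℝ fun y => ?_
      have := h x y
      simp only [LinearMap.comp_apply]
      rw [hS]
      linarith
  · constructor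
    · intro h x y
      have h1 : S (J x) = -J (S x) := LinearMap.congr_fun h x
      rw [h1, inner_neg_left, hS]
      ring
    · intro h
      refine LinearMap.ext fun x => ext_inner_right ℝ fun y => ?_
      have := h x y
      simp only [LinearMap.comp_apply, LinearMap.neg_apply]
      rw [inner_neg_left, hS]
      linarith

end
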